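/- Let V be a finite set, f : 2^V → ℝ a monotone function with f(S) ≥ 0 for all S, and let a partition matroid constraint be given by a partition B₁,…,B_k of V and thresholds d₁,…,d_k with d̄ = min_i d_i. Let d*₁,…,d*_k be a second threshold vector with 1 ≤ d*_i ≤ |B_i|, d* = Σ_i d*_i and d̄* = min_i d*_i, and assume d̄* ≥ d̄. Let OPT* be a D*-feasible set maximizing f among D*-feasible sets. Let X ⊆ V with |X| = j < d̄, and let γ with 0 ≤ γ ≤ 1 be a submodularity-ratio lower bound for f with parameters (j+1, d*). Then there exists v ∈ V∖X such that X∪{v} is both feasible and D*-feasible and f(X∪{v}) − f(X) ≥ (γ/d*)·(f(OPT*) − f(X)). -/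

import Mathlib

/-!
Since `#X < D i` for every `i`, adding any single element to `X` preserves feasibility, so only the
gain matters. If `f T > f X` for a `D*`-feasible set `T`, then `T \ X` is a nonempty set of at most
`∑ i, D* i` elements. By monotonicity and the submodularity ratio their gains sum to at least
`γ * (f T - f X)`, and some element gains at least the average. If `f T ≤ f X`, monotonicity makes
every element outside `X` good enough.
-/

open Finset

section Feasibility

variable {V ι : Type*} [DecidableEq V] {B : ι → Finset V} {D : ι → ℕ} {X : Finset V}

/-- Feasibility of `X` for the thresholds `D` on the blocks `B`. With the blocks a partition of `V`
this is independence in the partition matroid; the blocks are allowed to overlap here. -/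
def IsFeasible (B : ι → Finset V) (D : ι → ℕ) (X : Finset V) : Prop :=
  ∀ i, #(X ∩ B i) ≤ D i

theorem IsFeasible.card_le_sum [Fintype ι] (hX : IsFeasible B D X)
    (hcover : ∀ v ∈ X, ∃ i, v ∈ B i) : #X ≤ ∑ i, D i := by
  have hsub : X ⊆ univ.biUnion fun i ↦ X ∩ B i := fun v hv ↦ by
    obtain ⟨i, hi⟩ := hcover v hv
    exact mem_biUnion.2 ⟨i, mem_univ i, mem_inter.2 ⟨hv, hi⟩⟩
  calc #X ≤ #(univ.biUnion fun i ↦ X ∩ B i) := card_le_card hsub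
    _ ≤ ∑ i, #(X ∩ B i) := card_biUnion_le
    _ ≤ ∑ i, D i := sum_le_sum fun i _ ↦ hX i

theorem isFeasible_insert_of_card_lt (hX : ∀ i, #X < D i) (v : V) :
    IsFeasible B D (insert v X) := fun i ↦
  calc #(insert v X ∩ B i) ≤ #(insert v X) := card_le_card inter_subset_left
    _ ≤ #X + 1 := card_insert_le v X
    _ ≤ D i := hX i

end Feasibility

section Gain

variable {V K : Type*} [Field K] [LinearOrder K] [IsStrictOrderedRing K]

theorem exists_mem_div_le_of_le_sum {s : Finset V} {g : V → K} {a : K} {n : ℕ}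
    (hs : s.Nonempty) (hn : #s ≤ n) (ha : 0 ≤ a) (hsum : a ≤ ∑ v ∈ s, g v) :
    ∃ v ∈ s, a / n ≤ g v := by
  refine exists_le_of_sum_le hs ?_
  have hn_pos : (0 : K) < n := Nat.cast_pos.2 (hs.card_pos.trans_le hn)
  calc ∑ _v ∈ s, a / n = #s * (a / n) := by rw [sum_const, nsmul_eq_mul]
    _ ≤ n * (a / n) := by gcongr
    _ = a := mul_div_cancel₀ a hn_pos.ne'
    _ ≤ ∑ v ∈ s, g v := hsum

variable [DecidableEq V] {f : Finset V → K} {γ : K} {m n : ℕ} {X T : Finset V}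

/-- `γ` is a submodularity-ratio lower bound for `f` with parameters `(m, n)`. The range
`0 ≤ γ ≤ 1` is not part of the notion. -/
def IsSubmodularityRatioBound (f : Finset V → K) (γ : K) (m n : ℕ) : Prop :=
  ∀ S L : Finset V, Disjoint S L → #S < m → #L ≤ n →
    γ * (f (S ∪ L) - f S) ≤ ∑ v ∈ L, (f (insert v S) - f S)

namespace IsSubmodularityRatioBound

theorem mul_sub_le_sum_gain (hratio : IsSubmodularityRatioBound f γ m n) (hf : Monotone f)
    (hγ : 0 ≤ γ) (hX : #X < m) (hT : #(T \ X) ≤ n) :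
    γ * (f T - f X) ≤ ∑ v ∈ T \ X, (f (insert v X) - f X) := by
  have hmono : f T ≤ f (X ∪ T \ X) := hf (by simp)
  calc γ * (f T - f X) ≤ γ * (f (X ∪ T \ X) - f X) := by gcongr
    _ ≤ ∑ v ∈ T \ X, (f (insert v X) - f X) := hratio X (T \ X) disjoint_sdiff hX hT

theorem exists_notMem_mul_sub_le_gain (hratio : IsSubmodularityRatioBound f γ m n) (hf : Monotone f)
    (hγ : 0 ≤ γ) (hX : #X < m) (hT : #(T \ X) ≤ n) (hex : ∃ v, v ∉ X) :
    ∃ v ∉ X, γ / n * (f T - f X) ≤ f (insert v X) - f X := by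
  obtain hTX | hXT := le_or_gt (f T) (f X)
  · obtain ⟨v, hv⟩ := hex
    refine ⟨v, hv, ?_⟩
    calc γ / n * (f T - f X) ≤ 0 := mul_nonpos_of_nonneg_of_nonpos (by positivity) (by simpa)
      _ ≤ f (insert v X) - f X := sub_nonneg.2 (hf (subset_insert v X))
  · have hne : (T \ X).Nonempty := sdiff_nonempty.2 fun hsub ↦ (hf hsub).not_gt hXT
    obtain ⟨v, hv, hgain⟩ := exists_mem_div_le_of_le_sum hne hT
      (mul_nonneg hγ (sub_nonneg.2 hXT.le)) (hratio.mul_sub_le_sum_gain hf hγ hX hT)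
    exact ⟨v, (mem_sdiff.1 hv).2, by rwa [div_mul_eq_mul_div]⟩

end IsSubmodularityRatioBound

end Gain

theorem greedy_progress_monotone_dyn_general {V ι K : Type*} [DecidableEq V] [Fintype ι]
    [Field K] [LinearOrder K] [IsStrictOrderedRing K] {B : ι → Finset V} {D Dstar : ι → ℕ}
    {f : Finset V → K} {γ : K} {X T : Finset V}
    (hf : Monotone f) (hγ : 0 ≤ γ)
    (hratio : IsSubmodularityRatioBound f γ (#X + 1) (∑ i, Dstar i))
    (hXD : ∀ i, #X < D i) (hXDstar : ∀ i, #X < Dstar i) (hex : ∃ v, v ∉ X)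
    (hT : IsFeasible B Dstar T) (hcover : ∀ v ∈ T, ∃ i, v ∈ B i) :
    ∃ v ∉ X, IsFeasible B D (insert v X) ∧ IsFeasible B Dstar (insert v X) ∧
      γ / (∑ i, Dstar i : K) * (f T - f X) ≤ f (insert v X) - f X := by
  have hcard : #(T \ X) ≤ ∑ i, Dstar i :=
    (card_le_card sdiff_subset).trans (hT.card_le_sum hcover)
  obtain ⟨v, hv, hgain⟩ := hratio.exists_notMem_mul_sub_le_gain hf hγ (Nat.lt_succ_self _)
    hcard hex
  refine ⟨v, hv, isFeasible_insert_of_card_lt hXD v, isFeasible_insert_of_card_lt hXDstar v, ?_⟩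
  rwa [Nat.cast_sum] at hgain

/-- Greedy progress for monotone `f` with respect to a second threshold vector `D*`
with `d̄* ≥ d̄`: if `|X| = j < d̄` and `γ ∈ [0,1]` is a submodularity-ratio lower bound
for `f` with parameters `(j+1, d*)`, then some single-element addition is both feasible
and `D*`-feasible and gains at least `(γ/d*)(f OPT* - f X)`. -/
theorem greedy_progress_monotone_dyn {V : Type*} [Fintype V] [DecidableEq V] {k : ℕ}
    (hk : 0 < k)
    (B : Fin k → Finset V) (hpart : ∀ v : V, ∃! i, v ∈ B i)
    (hBne : ∀ i, (B i).Nonempty)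
    (D Dstar : Fin k → ℕ)
    (hD : ∀ i, 1 ≤ D i ∧ D i ≤ (B i).card)
    (hDstar : ∀ i, 1 ≤ Dstar i ∧ Dstar i ≤ (B i).card)
    (dbar dbarstar : ℕ)
    (hdbar : dbar = Finset.univ.inf' ⟨⟨0, hk⟩, Finset.mem_univ _⟩ D)
    (hdbarstar : dbarstar = Finset.univ.inf' ⟨⟨0, hk⟩, Finset.mem_univ _⟩ Dstar)
    (hge : dbar ≤ dbarstar)
    (f : Finset V → ℝ) (hf0 : ∀ S, 0 ≤ f S)
    (hmono : ∀ X Y : Finset V, X ⊆ Y → f X ≤ f Y)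
    (OPTstar : Finset V) (hOPTfeas : ∀ i, (OPTstar ∩ B i).card ≤ Dstar i)
    (hOPTmax : ∀ S : Finset V, (∀ i, (S ∩ B i).card ≤ Dstar i) → f S ≤ f OPTstar)
    (X : Finset V) (j : ℕ) (hXcard : X.card = j) (hj : j < dbar)
    (γ : ℝ) (hγ0 : 0 ≤ γ) (hγ1 : γ ≤ 1)
    (hγ : ∀ S L : Finset V, Disjoint S L → S.card < j + 1 → L.card ≤ ∑ i, Dstar i →
      γ * (f (S ∪ L) - f S) ≤ ∑ v ∈ L, (f (insert v S) - f S)) :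
    ∃ v ∉ X, (∀ i, ((insert v X) ∩ B i).card ≤ D i) ∧
      (∀ i, ((insert v X) ∩ B i).card ≤ Dstar i) ∧
      f (insert v X) - f X ≥ (γ / (∑ i, Dstar i : ℝ)) * (f OPTstar - f X) := by
  subst hdbar hdbarstar hXcard
  have hXD : ∀ i, #X < D i := fun i ↦ (lt_inf'_iff _).1 hj i (mem_univ i)
  have hXDstar : ∀ i, #X < Dstar i := fun i ↦ (lt_inf'_iff _).1 (hj.trans_le hge) i (mem_univ i)
  obtain ⟨v, -, hv⟩ := exists_mem_notMem_of_card_lt_card ((hXD ⟨0, hk⟩).trans_le (hD ⟨0, hk⟩).2)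
  exact greedy_progress_monotone_dyn_general hmono hγ0 hγ hXD hXDstar ⟨v, hv⟩ hOPTfeas
    fun v _ ↦ (hpart v).exists
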